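/- Let p be an odd prime. Call a 2×2 matrix Y over ℚ_p with trace 0 topologically nilpotent if Yⁿ → 0 as n → ∞, and call g ∈ SL(2,ℚ_p) topologically unipotent if g^(pⁿ) → 1 as n → ∞. Then for every topologically nilpotent trace-zero matrix Y the matrix 1 − Y/2 is invertible, the modified Cayley transform cay(Y) = (1 + Y/2)·(1 − Y/2)⁻¹ has determinant 1 and is topologically unipotent, and Y ↦ cay(Y) is a bijection from the set of topologically nilpotent trace-zero 2×2 matrices over ℚ_p onto the set of topologically unipotent elements of SL(2,ℚ_p). -/

import Mathlib

/-- A trace-zero `2×2` matrix `Y` over `ℚ_p` is topologically nilpotent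
if `Yⁿ → 0` as `n → ∞` (entrywise convergence). -/
def TopNilp (p : ℕ) [Fact p.Prime] (Y : Matrix (Fin 2) (Fin 2) ℚ_[p]) : Prop :=
  Filter.Tendsto (fun n : ℕ => Y ^ n) Filter.atTop (nhds 0)

/-- A matrix `g` (of determinant 1) over `ℚ_p` is topologically unipotent
if `g^(pⁿ) → 1` as `n → ∞` (entrywise convergence). -/
def TopUnip (p : ℕ) [Fact p.Prime] (g : Matrix (Fin 2) (Fin 2) ℚ_[p]) : Prop :=
  Filter.Tendsto (fun n : ℕ => g ^ (p ^ n)) Filter.atTop (nhds 1)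

/-- The modified Cayley transform `cay(Y) = (1 + Y/2)·(1 − Y/2)⁻¹`. -/
noncomputable def cay (p : ℕ) [Fact p.Prime] (Y : Matrix (Fin 2) (Fin 2) ℚ_[p]) :
    Matrix (Fin 2) (Fin 2) ℚ_[p] :=
  (1 + (2 : ℚ_[p])⁻¹ • Y) * (1 - (2 : ℚ_[p])⁻¹ • Y)⁻¹

/-!
A matrix `g` is topologically unipotent exactly when `g - 1` is topologically nilpotent: in either
case the powers of `g` are bounded, hence so is `ℤ[g]`, and therefore the polynomials `f` for which
all multiples of `f g` lie in a given ball around `0` form an ideal of `ℤ[X]` that contains a power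
of `p`. In a commutative ring where `p` is nilpotent, `x - 1` is nilpotent if and only if some
`x ^ p ^ n` is `1`.

Since the condition `g ^ p ^ n → 1` is stable under inversion, so is the set
`1 + {topologically nilpotents}`. Writing `cay Y = 2 (1 - Y / 2)⁻¹ - 1` then exhibits the Cayley
transform as the composition of the bijections `Y ↦ 1 - Y / 2`, `u ↦ u⁻¹` and `u ↦ 2 u - 1`.
Finally, `det (1 + Z) - det (1 - Z) = 2 tr Z` for `2 × 2` matrices, so `det (cay Y) = 1` if and
only if `tr Y = 0`.
-/

open Filter Set
open scoped NNReal Polynomial Ring Topology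

/-- An element `g` of a topological monoid is topologically unipotent with respect to `p` if
`g ^ p ^ n` tends to `1`; the analogue of `TopUnip` beyond matrices over `ℚ_[p]`. -/
def IsTopologicallyUnipotent {A : Type*} [Monoid A] [TopologicalSpace A] (p : ℕ) (g : A) : Prop :=
  Tendsto (fun n : ℕ => g ^ p ^ n) atTop (𝓝 1)

/-- An element of a normed ring is power-bounded if the norms of its powers are bounded; over an
ultrametric ring this makes the subring it generates bounded. -/
def IsPowerBounded {A : Type*} [SeminormedRing A] (a : A) : Prop :=
  ∃ C, ∀ n : ℕ, ‖a ^ n‖ ≤ C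

/-- The modified Cayley transform `y ↦ (1 + y / 2) (1 - y / 2)⁻¹` of an algebra over `K`, with the
convention that the inverse of a non-unit is `0`; the analogue of `cay` beyond matrices over
`ℚ_[p]`. -/
noncomputable def cayley (K : Type*) {A : Type*} [Field K] [Ring A] [Algebra K A] (y : A) : A :=
  (1 + (2 : K)⁻¹ • y) * (1 - (2 : K)⁻¹ • y)⁻¹ʳ

section CommRing

variable {R : Type*} [CommRing R] {p : ℕ}

lemma isNilpotent_sub_one_of_pow_prime_pow_eq_one (hp : p.Prime) (hpR : IsNilpotent (p : R))
    {x : R} {n : ℕ} (hx : x ^ p ^ n = 1) : IsNilpotent (x - 1) := by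
  obtain ⟨r, hr⟩ := exists_add_pow_prime_pow_eq hp (x - 1) 1 n
  have hpow : (x - 1) ^ p ^ n = p * (-((x - 1) * r)) := by
    rw [sub_add_cancel, hx, one_pow] at hr
    linear_combination -hr
  exact .of_pow (hpow ▸ (Commute.all _ _).isNilpotent_mul_right hpR)

lemma exists_pow_prime_pow_eq_one_of_isNilpotent_sub_one (hp : p.Prime)
    (hpR : IsNilpotent (p : R)) {x : R} (hx : IsNilpotent (x - 1)) : ∃ n, x ^ p ^ n = 1 := by
  obtain ⟨k, hk⟩ := hpR
  obtain ⟨m, hm⟩ := hx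
  have hdvd : (p : R) ∣ x ^ p ^ m - 1 := by
    obtain ⟨r, hr⟩ := exists_add_pow_prime_pow_eq hp (x - 1) 1 m
    rw [sub_add_cancel, pow_eq_zero_of_le (Nat.lt_pow_self hp.one_lt).le hm, one_pow] at hr
    exact ⟨(x - 1) * r, by linear_combination hr⟩
  have hdvd' : (p : R) ^ (k + 1) ∣ x ^ p ^ (m + k) - 1 := by
    simpa only [one_pow, ← pow_mul, ← pow_add] using dvd_sub_pow_of_dvd_sub hdvd k
  rw [pow_succ, hk, zero_mul, zero_dvd_iff, sub_eq_zero] at hdvd'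
  exact ⟨m + k, hdvd'⟩

end CommRing

section IdealInBall

variable {A R : Type*} [SeminormedRing A] [IsUltrametricDist A] [CommRing R]

/-- The largest ideal of `R` mapped by `φ` into the closed ball of radius `r` around `0`. The
quotients by these ideals translate limits along `φ` into algebra in commutative rings. -/
def idealInBall (φ : R →+* A) (r : ℝ≥0) : Ideal R where
  carrier := {f | ∀ q, ‖φ (q * f)‖ ≤ r}
  zero_mem' q := by simp
  add_mem' {f g} hf hg q := by
    rw [mul_add, map_add]
    exact (IsUltrametricDist.norm_add_le_max _ _).trans (max_le (hf q) (hg q))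
  smul_mem' c f hf q := by simpa only [smul_eq_mul, mul_assoc] using hf (q * c)

variable {φ : R →+* A}

lemma norm_map_le_of_mem_idealInBall {r : ℝ≥0} {f : R} (hf : f ∈ idealInBall φ r) : ‖φ f‖ ≤ r := by
  simpa using hf 1

lemma tendsto_map_zero_iff_eventually_mem_idealInBall (hφ : ∃ C, ∀ q, ‖φ q‖ ≤ C) {ι : Type*}
    {l : Filter ι} {f : ι → R} :
    Tendsto (fun i => φ (f i)) l (𝓝 0) ↔ ∀ r > 0, ∀ᶠ i in l, f i ∈ idealInBall φ r := by
  constructor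
  · obtain ⟨C, hC⟩ := hφ
    intro h r hr
    have hlim : Tendsto (fun i => C * ‖φ (f i)‖) l (𝓝 0) := by
      simpa using h.norm.const_mul C
    filter_upwards [hlim.eventually_le_const (NNReal.coe_pos.2 hr)] with i hi q
    calc ‖φ (q * f i)‖ ≤ ‖φ q‖ * ‖φ (f i)‖ := by rw [map_mul]; exact norm_mul_le _ _
      _ ≤ C * ‖φ (f i)‖ := by gcongr; exact hC q
      _ ≤ r := hi
  · intro h
    rw [NormedAddGroup.tendsto_nhds_zero]
    intro ε hε
    filter_upwards [h ⟨ε / 2, by positivity⟩ (half_pos hε)] with i hi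
    exact (norm_map_le_of_mem_idealInBall hi).trans_lt (half_lt_self hε)

lemma isTopologicallyNilpotent_map_iff (hφ : ∃ C, ∀ q, ‖φ q‖ ≤ C) (x : R) :
    IsTopologicallyNilpotent (φ x) ↔
      ∀ r > 0, IsNilpotent (Ideal.Quotient.mk (idealInBall φ r) x) := by
  simp only [IsTopologicallyNilpotent, ← map_pow,
    tendsto_map_zero_iff_eventually_mem_idealInBall hφ]
  refine forall₂_congr fun r _ => ?_
  simp only [← Ideal.Quotient.eq_zero_iff_mem, map_pow]
  exact ⟨fun h => h.exists, fun ⟨m, hm⟩ =>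
    eventually_atTop.2 ⟨m, fun n hn => pow_eq_zero_of_le hn hm⟩⟩

lemma isTopologicallyUnipotent_map_iff (hφ : ∃ C, ∀ q, ‖φ q‖ ≤ C) (p : ℕ) (x : R) :
    IsTopologicallyUnipotent p (φ x) ↔
      ∀ r > 0, ∃ n, Ideal.Quotient.mk (idealInBall φ r) x ^ p ^ n = 1 := by
  have hsub : ∀ n, φ x ^ p ^ n - 1 = φ (x ^ p ^ n - 1) := by simp
  rw [IsTopologicallyUnipotent, ← tendsto_sub_nhds_zero_iff]
  simp only [hsub, tendsto_map_zero_iff_eventually_mem_idealInBall hφ]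
  refine forall₂_congr fun r _ => ?_
  simp only [← Ideal.Quotient.eq_zero_iff_mem, map_sub, map_pow, map_one, sub_eq_zero]
  refine ⟨fun h => h.exists, fun ⟨m, hm⟩ => eventually_atTop.2 ⟨m, fun n hn => ?_⟩⟩
  rw [← Nat.add_sub_of_le hn, pow_add, pow_mul, hm, one_pow]

lemma isTopologicallyUnipotent_map_iff_sub_one (hφ : ∃ C, ∀ q, ‖φ q‖ ≤ C) {p : ℕ} (hp : p.Prime)
    (hpA : IsTopologicallyNilpotent (p : A)) (x : R) :
    IsTopologicallyUnipotent p (φ x) ↔ IsTopologicallyNilpotent (φ x - 1) := by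
  rw [← map_natCast φ p, isTopologicallyNilpotent_map_iff hφ] at hpA
  rw [← map_one φ, ← map_sub, isTopologicallyNilpotent_map_iff hφ,
    isTopologicallyUnipotent_map_iff hφ]
  refine forall₂_congr fun r hr => ?_
  have hpR := hpA r hr
  rw [map_natCast] at hpR
  rw [map_sub, map_one]
  exact ⟨fun ⟨_, hn⟩ => isNilpotent_sub_one_of_pow_prime_pow_eq_one hp hpR hn,
    exists_pow_prime_pow_eq_one_of_isNilpotent_sub_one hp hpR⟩

end IdealInBall

section PowerBounded

variable {A : Type*} [SeminormedRing A] {a g : A}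

lemma isPowerBounded_of_isTopologicallyNilpotent (ha : IsTopologicallyNilpotent a) :
    IsPowerBounded a := by
  obtain ⟨C, hC⟩ := (Tendsto.norm ha).bddAbove_range
  exact ⟨C, fun n => hC ⟨n, rfl⟩⟩

lemma IsPowerBounded.of_pow {m : ℕ} (hm : m ≠ 0) (ha : IsPowerBounded (a ^ m)) :
    IsPowerBounded a := by
  obtain ⟨C, hC⟩ := ha
  obtain ⟨D, hD⟩ := ((Finset.range m).image fun i => ‖a ^ i‖).bddAbove
  refine ⟨C * D, fun n => ?_⟩
  have hmod : ‖a ^ (n % m)‖ ≤ D :=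
    hD (by simpa using ⟨n % m, Nat.mod_lt n (Nat.pos_of_ne_zero hm), rfl⟩)
  calc ‖a ^ n‖ = ‖(a ^ m) ^ (n / m) * a ^ (n % m)‖ := by
        rw [← pow_mul, ← pow_add, Nat.div_add_mod]
    _ ≤ ‖(a ^ m) ^ (n / m)‖ * ‖a ^ (n % m)‖ := norm_mul_le _ _
    _ ≤ C * D := mul_le_mul (hC _) hmod (norm_nonneg _) ((norm_nonneg _).trans (hC 0))

variable [IsUltrametricDist A]

lemma IsPowerBounded.exists_norm_aeval_le (ha : IsPowerBounded a) :
    ∃ C, ∀ f : ℤ[X], ‖Polynomial.aeval a f‖ ≤ C := by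
  obtain ⟨C, hC⟩ := ha
  refine ⟨C, fun f => ?_⟩
  rw [Polynomial.aeval_eq_sum_range]
  exact IsUltrametricDist.norm_sum_le_of_forall_le_of_nonneg ((norm_nonneg _).trans (hC 0))
    fun i _ => (IsUltrametricDist.norm_zsmul_le _ _).trans (hC i)

lemma IsPowerBounded.aeval (ha : IsPowerBounded a) (f : ℤ[X]) :
    IsPowerBounded (Polynomial.aeval a f) := by
  obtain ⟨C, hC⟩ := ha.exists_norm_aeval_le
  exact ⟨C, fun n => by simpa only [map_pow] using hC (f ^ n)⟩

lemma IsPowerBounded.add_one (ha : IsPowerBounded a) : IsPowerBounded (a + 1) := by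
  have haeval : Polynomial.aeval a (Polynomial.X + 1 : ℤ[X]) = a + 1 := by simp
  exact haeval ▸ ha.aeval (Polynomial.X + 1)

lemma IsTopologicallyUnipotent.isPowerBounded {p : ℕ} (hp : p ≠ 0)
    (hg : IsTopologicallyUnipotent p g) : IsPowerBounded g := by
  obtain ⟨m, hm⟩ : ∃ m, ‖g ^ p ^ m - 1‖ < 1 := by
    simpa only [dist_eq_norm] using (Metric.tendsto_nhds.1 hg 1 one_pos).exists
  have hsub : IsPowerBounded (g ^ p ^ m - 1) :=
    isPowerBounded_of_isTopologicallyNilpotent (tendsto_pow_atTop_nhds_zero_of_norm_lt_one hm)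
  exact .of_pow (pow_ne_zero m hp) (by simpa only [sub_add_cancel] using hsub.add_one)

lemma IsPowerBounded.isTopologicallyUnipotent_iff_sub_one (hg : IsPowerBounded g) {p : ℕ}
    (hp : p.Prime) (hpA : IsTopologicallyNilpotent (p : A)) :
    IsTopologicallyUnipotent p g ↔ IsTopologicallyNilpotent (g - 1) := by
  simpa only [RingHom.coe_coe, Polynomial.aeval_X] using
    isTopologicallyUnipotent_map_iff_sub_one (φ := (Polynomial.aeval (R := ℤ) g : ℤ[X] →+* A))
      hg.exists_norm_aeval_le hp hpA Polynomial.X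

theorem isTopologicallyUnipotent_iff_isTopologicallyNilpotent_sub_one {p : ℕ} (hp : p.Prime)
    (hpA : IsTopologicallyNilpotent (p : A)) :
    IsTopologicallyUnipotent p g ↔ IsTopologicallyNilpotent (g - 1) := by
  refine ⟨fun hg => ?_, fun hg => ?_⟩
  · have hbdd := hg.isPowerBounded hp.ne_zero
    exact (hbdd.isTopologicallyUnipotent_iff_sub_one hp hpA).1 hg
  · have hbdd := (isPowerBounded_of_isTopologicallyNilpotent hg).add_one
    rw [sub_add_cancel] at hbdd
    exact (hbdd.isTopologicallyUnipotent_iff_sub_one hp hpA).2 hg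

end PowerBounded

section Inverse

variable {A : Type*} [NormedRing A] [HasSummableGeomSeries A] {p : ℕ} {a g : A}

lemma isUnit_one_sub_of_isTopologicallyNilpotent (ha : IsTopologicallyNilpotent a) :
    IsUnit (1 - a) := by
  have hlim : Tendsto (fun n : ℕ => 1 - a ^ n) atTop (𝓝 1) := by
    simpa only [sub_zero] using ha.const_sub 1
  obtain ⟨n, hn⟩ := (hlim.eventually (Units.isOpen.mem_nhds isUnit_one)).exists
  have hcomm : Commute (1 - a) (∑ i ∈ Finset.range n, a ^ i) :=
    .sum_right _ _ _ fun i _ => (Commute.one_left _).sub_left (.pow_right (.refl a) i)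
  exact (hcomm.isUnit_mul_iff.1 (by rwa [mul_neg_geom_sum])).1

lemma IsTopologicallyUnipotent.isUnit (hp : p ≠ 0) (hg : IsTopologicallyUnipotent p g) :
    IsUnit g := by
  obtain ⟨n, hn⟩ := (hg.eventually (Units.isOpen.mem_nhds isUnit_one)).exists
  exact (isUnit_pow_iff (pow_ne_zero n hp)).1 hn

lemma IsTopologicallyUnipotent.inverse (hg : IsTopologicallyUnipotent p g) :
    IsTopologicallyUnipotent p g⁻¹ʳ := by
  have hlim := (NormedRing.inverse_continuousAt (1 : Aˣ)).tendsto.comp hg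
  simpa only [IsTopologicallyUnipotent, Function.comp_def, Units.val_one, Ring.inverse_one,
    Ring.inverse_pow] using hlim

lemma bijOn_inverse_isTopologicallyUnipotent (hp : p ≠ 0) :
    BijOn (Ring.inverse : A → A) {g | IsTopologicallyUnipotent p g}
      {g | IsTopologicallyUnipotent p g} := by
  have hinv : LeftInvOn (Ring.inverse : A → A) Ring.inverse {g | IsTopologicallyUnipotent p g} :=
    fun g hg => Ring.inverse_inverse (hg.isUnit hp)
  exact InvOn.bijOn ⟨hinv, hinv⟩ (fun _ => IsTopologicallyUnipotent.inverse)
    fun _ => IsTopologicallyUnipotent.inverse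

end Inverse

section Cayley

lemma cayley_eq_two_smul_inverse_sub_one {K A : Type*} [Field K] [Ring A] [Algebra K A] {y : A}
    (hy : IsUnit (1 - (2 : K)⁻¹ • y)) :
    cayley K y = (2 : K) • (1 - (2 : K)⁻¹ • y)⁻¹ʳ - 1 := by
  have hnum : 1 + (2 : K)⁻¹ • y = (2 : K) • (1 : A) - (1 - (2 : K)⁻¹ • y) := by
    rw [two_smul]; abel
  rw [cayley, hnum, sub_mul, Ring.mul_inverse_cancel _ hy, smul_one_mul]

variable {K A : Type*} [NormedField K]

section Seminormed

variable [SeminormedRing A] [NormedAlgebra K A]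

lemma isTopologicallyNilpotent_smul_iff {c : K} (hc : ‖c‖ = 1) {a : A} :
    IsTopologicallyNilpotent (c • a) ↔ IsTopologicallyNilpotent a := by
  simp only [IsTopologicallyNilpotent, tendsto_zero_iff_norm_tendsto_zero (E := A), smul_pow,
    norm_smul, norm_pow, hc, one_pow, one_mul]

lemma isTopologicallyNilpotent_natCast {p : ℕ} (hpK : ‖(p : K)‖ < 1) :
    IsTopologicallyNilpotent (p : A) := by
  have hp : IsTopologicallyNilpotent (p : K) := tendsto_pow_atTop_nhds_zero_of_norm_lt_one hpK
  simpa using hp.map (continuous_algebraMap K A)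

lemma bijOn_one_sub_half_smul (h2 : ‖(2 : K)‖ = 1) :
    BijOn (fun y : A => 1 - (2 : K)⁻¹ • y) {y | IsTopologicallyNilpotent y}
      {u | IsTopologicallyNilpotent (u - 1)} := by
  have h2' : (2 : K) ≠ 0 := norm_ne_zero_iff.1 (h2 ▸ one_ne_zero)
  refine InvOn.bijOn (f' := fun u => (2 : K) • (1 - u)) ⟨fun y _ => ?_, fun u _ => ?_⟩ ?_ ?_
  · simp [h2']
  · simp [h2']
  · intro y hy
    have hsub : 1 - (2 : K)⁻¹ • y - 1 = (-(2 : K)⁻¹) • y := by rw [neg_smul]; abel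
    rw [mem_ofPred_eq, hsub]
    exact (isTopologicallyNilpotent_smul_iff (by simp [h2])).2 hy
  · intro u hu
    have hsmul : (2 : K) • (1 - u) = (-2 : K) • (u - 1) := by module
    change IsTopologicallyNilpotent ((2 : K) • (1 - u))
    rw [hsmul]
    exact (isTopologicallyNilpotent_smul_iff (by simp [h2])).2 hu

lemma bijOn_two_smul_sub_one (h2 : ‖(2 : K)‖ = 1) :
    BijOn (fun u : A => (2 : K) • u - 1) {u | IsTopologicallyNilpotent (u - 1)}
      {g | IsTopologicallyNilpotent (g - 1)} := by
  have h2' : (2 : K) ≠ 0 := norm_ne_zero_iff.1 (h2 ▸ one_ne_zero)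
  refine InvOn.bijOn (f' := fun g => (2 : K)⁻¹ • (g + 1)) ⟨fun u _ => ?_, fun g _ => ?_⟩ ?_ ?_
  · simp [h2']
  · simp [h2']
  · intro u hu
    have hsub : (2 : K) • u - 1 - 1 = (2 : K) • (u - 1) := by module
    rw [mem_ofPred_eq, hsub]
    exact (isTopologicallyNilpotent_smul_iff h2).2 hu
  · intro g hg
    have hsub : (2 : K)⁻¹ • (g + 1) - 1 = (2 : K)⁻¹ • (g - 1) := by
      match_scalars <;> field_simp; norm_num
    rw [mem_ofPred_eq, hsub]
    exact (isTopologicallyNilpotent_smul_iff (by simp [h2])).2 hg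

end Seminormed

variable [NormedRing A] [NormedAlgebra K A] [HasSummableGeomSeries A]

lemma isUnit_one_sub_half_smul (h2 : ‖(2 : K)‖ = 1) {y : A} (hy : IsTopologicallyNilpotent y) :
    IsUnit (1 - (2 : K)⁻¹ • y) :=
  isUnit_one_sub_of_isTopologicallyNilpotent <|
    (isTopologicallyNilpotent_smul_iff (by simp [h2])).2 hy

variable [IsUltrametricDist A] {p : ℕ}

theorem bijOn_cayley (hp : p.Prime) (hpK : ‖(p : K)‖ < 1) (h2 : ‖(2 : K)‖ = 1) :
    BijOn (cayley K) {y : A | IsTopologicallyNilpotent y}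
      {g : A | IsTopologicallyUnipotent p g} := by
  have hinv := bijOn_inverse_isTopologicallyUnipotent (A := A) hp.ne_zero
  simp only [isTopologicallyUnipotent_iff_isTopologicallyNilpotent_sub_one hp
    (isTopologicallyNilpotent_natCast (A := A) hpK)] at hinv ⊢
  refine ((bijOn_two_smul_sub_one h2).comp (hinv.comp (bijOn_one_sub_half_smul h2))).congr
    fun y hy => ?_
  exact (cayley_eq_two_smul_inverse_sub_one (isUnit_one_sub_half_smul h2 hy)).symm

end Cayley

section Matrix

/-- The entrywise supremum norm on square matrices, which is submultiplicative over an ultrametric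
ring; it induces the entrywise topology. -/
noncomputable abbrev ultrametricMatrixNormedRing {n R : Type*} [Fintype n] [DecidableEq n]
    [NormedRing R] [IsUltrametricDist R] : NormedRing (Matrix n n R) where
  __ := Matrix.normedAddCommGroup
  __ := Matrix.instRing
  norm_mul_le M N := by
    let _ : NormedAddCommGroup (Matrix n n R) := Matrix.normedAddCommGroup
    refine (Matrix.norm_le_iff (by positivity)).2 fun i j => ?_
    rw [Matrix.mul_apply]
    refine IsUltrametricDist.norm_sum_le_of_forall_le_of_nonneg (by positivity) fun k _ => ?_
    calc ‖M i k * N k j‖ ≤ ‖M i k‖ * ‖N k j‖ := norm_mul_le _ _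
      _ ≤ ‖M‖ * ‖N‖ := by gcongr <;> apply Matrix.norm_entry_le_entrywise_sup_norm

attribute [local instance] ultrametricMatrixNormedRing

variable {n K : Type*} [Fintype n] [DecidableEq n] [NormedField K] [IsUltrametricDist K]

/-- The algebra structure on square matrices is normed for the entrywise supremum norm; needed to
apply results on normed algebras to matrices. -/
noncomputable abbrev ultrametricMatrixNormedAlgebra : NormedAlgebra K (Matrix n n K) where
  __ := Matrix.instAlgebra
  norm_smul_le := (Matrix.normedSpace : NormedSpace K (Matrix n n K)).norm_smul_le

attribute [local instance] ultrametricMatrixNormedAlgebra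

lemma isUltrametricDist_matrix : IsUltrametricDist (Matrix n n K) :=
  inferInstanceAs (IsUltrametricDist (n → n → K))

lemma completeSpace_matrix [CompleteSpace K] :
    @CompleteSpace (Matrix n n K) PseudoMetricSpace.toUniformSpace :=
  inferInstanceAs (CompleteSpace (n → n → K))

attribute [local instance] isUltrametricDist_matrix completeSpace_matrix

variable [CompleteSpace K]

lemma isUnit_one_sub_half_smul_matrix (h2 : ‖(2 : K)‖ = 1) {Y : Matrix n n K}
    (hY : IsTopologicallyNilpotent Y) : IsUnit (1 - (2 : K)⁻¹ • Y) :=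
  isUnit_one_sub_half_smul h2 hY

theorem bijOn_cayley_matrix {p : ℕ} (hp : p.Prime) (hpK : ‖(p : K)‖ < 1)
    (h2 : ‖(2 : K)‖ = 1) :
    BijOn (cayley K) {Y : Matrix n n K | IsTopologicallyNilpotent Y}
      {g : Matrix n n K | IsTopologicallyUnipotent p g} :=
  bijOn_cayley hp hpK h2

end Matrix

lemma det_one_add_sub_det_one_sub {R : Type*} [CommRing R] (Z : Matrix (Fin 2) (Fin 2) R) :
    (1 + Z).det - (1 - Z).det = 2 * Z.trace := by
  rw [Matrix.det_fin_two, Matrix.det_fin_two, Matrix.trace_fin_two]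
  simp only [Matrix.add_apply, Matrix.sub_apply, Matrix.one_apply_eq,
    Matrix.one_apply_ne zero_ne_one, Matrix.one_apply_ne one_ne_zero]
  ring

lemma det_cayley_eq_one_iff {F : Type*} [Field F] (h2 : (2 : F) ≠ 0)
    {Y : Matrix (Fin 2) (Fin 2) F} (hY : IsUnit (1 - (2 : F)⁻¹ • Y)) :
    (cayley F Y).det = 1 ↔ Y.trace = 0 := by
  have hdet : (1 - (2 : F)⁻¹ • Y).det ≠ 0 := ((Matrix.isUnit_iff_isUnit_det _).1 hY).ne_zero
  have htrace : (1 + (2 : F)⁻¹ • Y).det - (1 - (2 : F)⁻¹ • Y).det = Y.trace := by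
    rw [det_one_add_sub_det_one_sub, Matrix.trace_smul, smul_eq_mul, mul_inv_cancel_left₀ h2]
  rw [cayley, ← Matrix.nonsing_inv_eq_ringInverse, Matrix.det_mul, Matrix.det_nonsing_inv,
    Ring.inverse_eq_inv', mul_inv_eq_one₀ hdet, ← sub_eq_zero, htrace]

theorem stmt9_general {K : Type*} [NormedField K] [CompleteSpace K] [IsUltrametricDist K] {p : ℕ}
    (hp : p.Prime) (hpK : ‖(p : K)‖ < 1) (h2 : ‖(2 : K)‖ = 1) :
    (∀ Y : Matrix (Fin 2) (Fin 2) K, Y.trace = 0 → IsTopologicallyNilpotent Y →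
      IsUnit (1 - (2 : K)⁻¹ • Y) ∧ (cayley K Y).det = 1 ∧
        IsTopologicallyUnipotent p (cayley K Y)) ∧
    BijOn (cayley K)
      {Y : Matrix (Fin 2) (Fin 2) K | Y.trace = 0 ∧ IsTopologicallyNilpotent Y}
      {g : Matrix (Fin 2) (Fin 2) K | g.det = 1 ∧ IsTopologicallyUnipotent p g} := by
  have hunit {Y : Matrix (Fin 2) (Fin 2) K} (hY : IsTopologicallyNilpotent Y) :
      IsUnit (1 - (2 : K)⁻¹ • Y) := isUnit_one_sub_half_smul_matrix h2 hY
  have hdet {Y : Matrix (Fin 2) (Fin 2) K} (hY : IsTopologicallyNilpotent Y) :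
      (cayley K Y).det = 1 ↔ Y.trace = 0 :=
    det_cayley_eq_one_iff (norm_ne_zero_iff.1 (h2 ▸ one_ne_zero)) (hunit hY)
  have hbij := bijOn_cayley_matrix (n := Fin 2) hp hpK h2
  have hmaps : MapsTo (cayley K)
      {Y : Matrix (Fin 2) (Fin 2) K | Y.trace = 0 ∧ IsTopologicallyNilpotent Y}
      {g : Matrix (Fin 2) (Fin 2) K | g.det = 1 ∧ IsTopologicallyUnipotent p g} :=
    fun Y hY => ⟨(hdet hY.2).2 hY.1, hbij.mapsTo hY.2⟩
  refine ⟨fun Y hY₀ hY => ⟨hunit hY, hmaps ⟨hY₀, hY⟩⟩, hmaps,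
    hbij.injOn.mono fun Y hY => hY.2, fun g hg => ?_⟩
  obtain ⟨Y, hY, rfl⟩ := hbij.surjOn hg.2
  exact ⟨Y, ⟨(hdet hY).1 hg.1, hY⟩, rfl⟩

section Padic

variable {p : ℕ} [Fact p.Prime]

lemma padic_norm_two (hp : Odd p) : ‖(2 : ℚ_[p])‖ = 1 := by
  exact_mod_cast Padic.norm_natCast_eq_one_iff.2 (Nat.coprime_two_right.2 hp)

lemma cay_eq_cayley : cay p = cayley ℚ_[p] := by
  funext Y
  rw [cay, cayley, Matrix.nonsing_inv_eq_ringInverse]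

end Padic

/-- For `p` an odd prime: for every topologically nilpotent trace-zero `2×2` matrix `Y`
over `ℚ_p`, the matrix `1 − Y/2` is invertible, the modified Cayley transform
`cay(Y) = (1 + Y/2)(1 − Y/2)⁻¹` has determinant `1` and is topologically unipotent, and
`cay` is a bijection from the set of topologically nilpotent trace-zero matrices onto the
set of topologically unipotent elements of `SL(2,ℚ_p)`. -/
theorem stmt9 (p : ℕ) [Fact p.Prime] (hp : Odd p) :
    (∀ Y : Matrix (Fin 2) (Fin 2) ℚ_[p], Y.trace = 0 → TopNilp p Y →
      IsUnit (1 - (2 : ℚ_[p])⁻¹ • Y) ∧ (cay p Y).det = 1 ∧ TopUnip p (cay p Y)) ∧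
    Set.BijOn (cay p)
      {Y : Matrix (Fin 2) (Fin 2) ℚ_[p] | Y.trace = 0 ∧ TopNilp p Y}
      {g : Matrix (Fin 2) (Fin 2) ℚ_[p] | g.det = 1 ∧ TopUnip p g} := by
  rw [cay_eq_cayley]
  exact stmt9_general Fact.out Padic.norm_p_lt_one (padic_norm_two hp)
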